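/- arXiv:1609.01144 — 3 statements merged into one kernel-verified Lean document; each statement's English description precedes it below -/
import Mathlib

section
/- Assume Σ has at least 3 elements. A function f : Σ* → Σ* is congruence preserving if and only if there exist n ∈ ℕ and words w₀, …, wₙ ∈ Σ* such that f(x) = w₀ x w₁ x ⋯ w_{n-1} x wₙ for all x ∈ Σ*. -/
/-- A congruence on the free monoid `List S`: an equivalence relation compatible
with concatenation. -/
def IsCong {S : Type*} (r : List S → List S → Prop) : Prop :=
  Equivalence r ∧ ∀ x y u v : List S, r x y → r u v → r (x ++ u) (y ++ v)

/-- A monoid homomorphism from the free monoid `List S` to itself. -/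
def IsHom {S : Type*} (φ : List S → List S) : Prop :=
  φ [] = [] ∧ ∀ x y : List S, φ (x ++ y) = φ x ++ φ y

/-- `f` is congruence preserving. -/
def IsCP {S : Type*} (f : List S → List S) : Prop :=
  ∀ r : List S → List S → Prop, IsCong r → ∀ x y : List S, r x y → r (f x) (f y)

/-- `f` preserves all restricted congruences (kernels of endomorphisms of the free monoid). -/
def IsRCP {S : Type*} (f : List S → List S) : Prop :=
  ∀ φ : List S → List S, IsHom φ → ∀ x y : List S, φ x = φ y → φ (f x) = φ (f y)

/-- `f x = w₀ x w₁ x ⋯ x wₙ` for fixed words `w₀, …, wₙ`. -/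
def PolyForm {S : Type*} (f : List S → List S) : Prop :=
  ∃ (n : ℕ) (w : ℕ → List S), ∀ x : List S,
    f x = w 0 ++ List.flatten ((List.range n).map fun i => x ++ w (i + 1))

theorem IsCong.refl {S : Type*} {r : List S → List S → Prop} (hr : IsCong r) (x : List S) :
    r x x := hr.1.refl x

theorem isCong_flatMap {S T : Type*} (h : S → List T) :
    IsCong fun x y : List S => x.flatMap h = y.flatMap h := by
  refine ⟨⟨fun _ => rfl, Eq.symm, Eq.trans⟩, fun x y u v hxy huv => ?_⟩
  simp only [List.flatMap_append, hxy, huv]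

theorem PolyForm.isCP {S : Type*} {f : List S → List S} (hf : PolyForm f) : IsCP f := by
  obtain ⟨n, w, hw⟩ := hf
  intro r hr x y hxy
  rw [hw, hw]
  refine hr.2 _ _ _ _ (hr.refl _) ?_
  induction List.range n with
  | nil => exact hr.refl _
  | cons i l ih => exact hr.2 _ _ _ _ (hr.2 _ _ _ _ hxy (hr.refl _)) ih

theorem polyForm_nil {S : Type*} : PolyForm fun _ : List S => [] :=
  ⟨0, fun _ => [], by simp⟩

theorem PolyForm.cons {S : Type*} {f : List S → List S} (hf : PolyForm f) (s : S) :
    PolyForm fun x => s :: f x := by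
  obtain ⟨n, w, hw⟩ := hf
  refine ⟨n, fun i => if i = 0 then s :: w 0 else w i, fun x => ?_⟩
  simp [hw]

theorem PolyForm.self_append {S : Type*} {f : List S → List S} (hf : PolyForm f) :
    PolyForm fun x => x ++ f x := by
  obtain ⟨n, w, hw⟩ := hf
  refine ⟨n + 1, fun i => if i = 0 then [] else w (i - 1), fun x => ?_⟩
  simp [hw, List.range_succ_eq_map, List.map_map, Function.comp_def]

open Classical in
/-- The substitution sending the letter `e` to the word `x` and fixing the other letters. -/
noncomputable def substLetter {S : Type*} (e : S) (x : List S) (s : S) : List S :=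
  if s = e then x else [s]

theorem substLetter_singleton_eq_iff {S : Type*} {p q s t : S} :
    substLetter s [t] p = substLetter s [t] q ↔
      p = q ∨ (p = s ∧ q = t) ∨ (p = t ∧ q = s) := by
  unfold substLetter
  split_ifs <;> simp <;> grind

theorem exists_substLetter_singleton {S : Type*} (s t p : S) :
    ∃ q, substLetter s [t] p = [q] := by
  unfold substLetter
  split_ifs <;> exact ⟨_, rfl⟩

theorem flatMap_substLetter_singleton_cons {S : Type*} {s t p q : S} {P Q : List S}
    (h : (p :: P).flatMap (substLetter s [t]) = (q :: Q).flatMap (substLetter s [t])) :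
    (p = q ∨ (p = s ∧ q = t) ∨ (p = t ∧ q = s)) ∧
      P.flatMap (substLetter s [t]) = Q.flatMap (substLetter s [t]) := by
  rw [← substLetter_singleton_eq_iff]
  obtain ⟨p', hp⟩ := exists_substLetter_singleton s t p
  obtain ⟨q', hq⟩ := exists_substLetter_singleton s t q
  simpa [hp, hq] using h

theorem flatMap_substLetter_singleton_eq_nil {S : Type*} {s t : S} {P : List S} :
    P.flatMap (substLetter s [t]) = [] ↔ P = [] := by
  refine ⟨fun h => ?_, fun h => by simp [h]⟩
  cases P with
  | nil => rfl
  | cons p P =>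
    obtain ⟨p', hp⟩ := exists_substLetter_singleton s t p
    simp [hp] at h

theorem flatMap_substLetter_of_notMem {S : Type*} {e : S} {x y : List S} (he : e ∉ y) :
    y.flatMap (substLetter e x) = y := by
  induction y with
  | nil => rfl
  | cons s y ih =>
    simp only [List.mem_cons, not_or] at he
    simp [ih he.2, substLetter, Ne.symm he.1]

theorem exists_polyForm_of_merge_eq {S : Type*} {a b c : S} (hab : a ≠ b) (hac : a ≠ c)
    (hbc : b ≠ c) (A B C : List S)
    (h₁ : A.flatMap (substLetter a [b]) = B.flatMap (substLetter a [b]))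
    (h₂ : B.flatMap (substLetter b [c]) = C.flatMap (substLetter b [c]))
    (h₃ : A.flatMap (substLetter a [c]) = C.flatMap (substLetter a [c])) :
    ∃ g : List S → List S, PolyForm g ∧ g [a] = A ∧ g [b] = B ∧ g [c] = C := by
  induction A generalizing B C with
  | nil =>
    obtain rfl := flatMap_substLetter_singleton_eq_nil.1 h₁.symm
    obtain rfl := flatMap_substLetter_singleton_eq_nil.1 h₃.symm
    exact ⟨_, polyForm_nil, rfl, rfl, rfl⟩
  | cons p A ih =>
    rcases B with _ | ⟨q, B⟩
    · simpa using flatMap_substLetter_singleton_eq_nil.1 h₁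
    rcases C with _ | ⟨r, C⟩
    · simpa using flatMap_substLetter_singleton_eq_nil.1 h₃
    obtain ⟨k₁, h₁⟩ := flatMap_substLetter_singleton_cons h₁
    obtain ⟨k₂, h₂⟩ := flatMap_substLetter_singleton_cons h₂
    obtain ⟨k₃, h₃⟩ := flatMap_substLetter_singleton_cons h₃
    obtain ⟨g, hg, rfl, rfl, rfl⟩ := ih B C h₁ h₂ h₃
    have : (p = q ∧ q = r) ∨ (p = a ∧ q = b ∧ r = c) := by grind
    rcases this with ⟨rfl, rfl⟩ | ⟨rfl, rfl, rfl⟩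
    · exact ⟨_, hg.cons p, rfl, rfl, rfl⟩
    · exact ⟨_, hg.self_append, rfl, rfl, rfl⟩

theorem exists_append_of_ne {S : Type*} {P Q : List S} (h : P ≠ Q) :
    ∃ u P' Q', P = u ++ P' ∧ Q = u ++ Q' ∧ P'.head? ≠ Q'.head? := by
  induction P generalizing Q with
  | nil =>
    cases Q with
    | nil => exact absurd rfl h
    | cons q Q => exact ⟨[], [], q :: Q, rfl, rfl, by simp⟩
  | cons p P ih =>
    cases Q with
    | nil => exact ⟨[], p :: P, [], rfl, rfl, by simp⟩
    | cons q Q =>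
      by_cases hpq : p = q
      · subst hpq
        obtain ⟨u, P', Q', rfl, rfl, hne⟩ := ih (Q := Q) (fun hPQ => h (by rw [hPQ]))
        exact ⟨p :: u, P', Q', rfl, rfl, hne⟩
      · exact ⟨[], p :: P, q :: Q, rfl, rfl, by simpa using hpq⟩

theorem head?_eq_of_flatMap_substLetter_eq {S : Type*} {e : S} {x P Q : List S}
    (hne : P.head? ≠ Q.head?)
    (h : P.flatMap (substLetter e x) = Q.flatMap (substLetter e x)) :
    P.head? = some e ∨ Q.head? = some e := by
  by_contra! hcon
  rcases P with _ | ⟨p, P⟩ <;> rcases Q with _ | ⟨q, Q⟩ <;> simp_all [substLetter]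

theorem head?_eq_of_flatMap_substLetter_cons_eq {S : Type*} {e y : S} {x P Q : List S}
    (hne : P.head? ≠ Q.head?)
    (h : P.flatMap (substLetter e (y :: x)) = Q.flatMap (substLetter e (y :: x))) :
    P.head? = some y ∨ Q.head? = some y := by
  have := head?_eq_of_flatMap_substLetter_eq hne h
  rcases P with _ | ⟨p, P⟩ <;> rcases Q with _ | ⟨q, Q⟩ <;>
    simp only [List.flatMap_cons, List.flatMap_nil, substLetter] at h <;> grind

open Classical in
theorem card_toFinset_flatMap_substLetter_lt {S : Type*} {s t : S} {x : List S} (hst : s ≠ t)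
    (hs : s ∈ x) (ht : t ∈ x) :
    (x.flatMap (substLetter s [t])).toFinset.card < x.toFinset.card := by
  refine Finset.card_lt_card ((Finset.ssubset_iff_of_subset fun z hz => ?_).2 ⟨s, ?_, ?_⟩)
  · simp only [List.mem_toFinset, List.mem_flatMap, substLetter] at hz ⊢
    grind
  · simpa using hs
  · simp only [List.mem_toFinset, List.mem_flatMap, substLetter]
    grind

theorem flatMap_substLetter_idem {S : Type*} {s t : S} (hst : s ≠ t) (x : List S) :
    (x.flatMap (substLetter s [t])).flatMap (substLetter s [t]) =
      x.flatMap (substLetter s [t]) := by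
  refine flatMap_substLetter_of_notMem fun h => ?_
  simp only [List.mem_flatMap, substLetter] at h
  grind

theorem IsCP.eq_of_eq_on_letters {S : Type*} {a b c : S} (hab : a ≠ b) (hac : a ≠ c)
    (hbc : b ≠ c) {f g : List S → List S} (hf : IsCP f) (hg : IsCP g)
    (ha : f [a] = g [a]) (hb : f [b] = g [b]) (hc : f [c] = g [c]) (x : List S) :
    f x = g x := by
  classical
  induction hn : x.toFinset.card using Nat.strong_induction_on generalizing x with
  | _ n ih =>
  subst hn
  by_contra hne
  obtain ⟨u, P, Q, hP, hQ, hPQ⟩ := exists_append_of_ne hne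
  have cancel {e : S} {z y : List S} (hy : f y = g y)
      (hxy : x.flatMap (substLetter e z) = y.flatMap (substLetter e z)) :
      P.flatMap (substLetter e z) = Q.flatMap (substLetter e z) := by
    have h := (hf _ (isCong_flatMap (substLetter e z)) _ _ hxy).trans
      ((congrArg _ hy).trans (hg _ (isCong_flatMap (substLetter e z)) _ _ hxy).symm)
    simpa [hP, hQ] using h
  have subst_eq {e : S} (he : f [e] = g [e]) (hx : e ∉ x) :
      P.flatMap (substLetter e x) = Q.flatMap (substLetter e x) :=
    cancel he (by rw [flatMap_substLetter_of_notMem hx]; simp [substLetter])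
  have merge {s t : S} (hst : s ≠ t) (hs : s ∈ x) (ht : t ∈ x) :
      (P.head? = some s ∨ Q.head? = some s) ∧ (P.head? = some t ∨ Q.head? = some t) := by
    have h := cancel (ih _ (card_toFinset_flatMap_substLetter_lt hst hs ht) _ rfl)
      (flatMap_substLetter_idem hst x).symm
    exact ⟨head?_eq_of_flatMap_substLetter_eq hPQ h,
      head?_eq_of_flatMap_substLetter_cons_eq hPQ h⟩
  have missing {e : S} (he : f [e] = g [e]) (hx : e ∉ x) :
      P.head? = some e ∨ Q.head? = some e :=
    head?_eq_of_flatMap_substLetter_eq hPQ (subst_eq he hx)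
  rcases x with _ | ⟨y, x⟩
  · have h₁ := missing ha (by simp)
    have h₂ := missing hb (by simp)
    have h₃ := missing hc (by simp)
    grind
  have letter {e : S} (he : f [e] = g [e]) (hey : e ≠ y) :
      (P.head? = some e ∨ Q.head? = some e) ∧ (P.head? = some y ∨ Q.head? = some y) := by
    by_cases hx : e ∈ y :: x
    · exact merge hey hx (by simp)
    · exact ⟨missing he hx, head?_eq_of_flatMap_substLetter_cons_eq hPQ (subst_eq he hx)⟩
  have h₁ := letter ha
  have h₂ := letter hb
  have h₃ := letter hc
  grind

/-- If `S` has at least 3 elements, `f : S* → S*` is congruence preserving iff it is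
of the form `x ↦ w₀ x w₁ x ⋯ x wₙ`. -/
theorem stmt_1 {S : Type*} (a b c : S) (hab : a ≠ b) (hac : a ≠ c) (hbc : b ≠ c)
    (f : List S → List S) : IsCP f ↔ PolyForm f := by
  refine ⟨fun hf => ?_, PolyForm.isCP⟩
  have merge {s t : S} (hst : s ≠ t) :
      (f [s]).flatMap (substLetter s [t]) = (f [t]).flatMap (substLetter s [t]) :=
    hf _ (isCong_flatMap _) _ _ (by simp [substLetter, hst.symm])
  obtain ⟨g, hg, ha, hb, hc⟩ := exists_polyForm_of_merge_eq hab hac hbc _ _ _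
    (merge hab) (merge hbc) (merge hac)
  rwa [funext (hf.eq_of_eq_on_letters hab hac hbc hg.isCP ha.symm hb.symm hc.symm)]
end

section
/- Let k ≥ 1 and f : (Σ*)ᵏ → Σ* be RCP, and let u₁, …, u_k, v₁, …, v_k ∈ Σ*, a, b ∈ Σ, and n₁, …, n_k ∈ ℕ. Then: (1) if |uᵢ| = |vᵢ| for all i ∈ {1, …, k}, then |f(u₁, …, u_k)| = |f(v₁, …, v_k)|; (2) if |uᵢ|_a = |vᵢ|_a for all i ∈ {1, …, k}, then |f(u₁, …, u_k)|_a = |f(v₁, …, v_k)|_a; (3) if b ≠ a then |f(a^{n₁}, …, a^{n_k})|_b = |f(ε, …, ε)|_b. -/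
/-- A `k`-ary function is congruence preserving. -/
def IsCPK {S : Type*} (k : ℕ) (f : (Fin k → List S) → List S) : Prop :=
  ∀ r : List S → List S → Prop, IsCong r → ∀ x y : Fin k → List S,
    (∀ i, r (x i) (y i)) → r (f x) (f y)

/-- A `k`-ary function preserves all restricted congruences
(kernels of endomorphisms of the free monoid). -/
def IsRCPK {S : Type*} (k : ℕ) (f : (Fin k → List S) → List S) : Prop :=
  ∀ φ : List S → List S, IsHom φ → ∀ x y : Fin k → List S,
    (∀ i, φ (x i) = φ (y i)) → φ (f x) = φ (f y)

/-- `f (x₁, …, x_k) = w₀ x_{i₁}^{p₁} w₁ x_{i₂}^{p₂} w₂ ⋯ x_{iₙ}^{pₙ} wₙ`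
for fixed words `w₀, …, wₙ`, indices `i₁, …, iₙ` and exponents `p₁, …, pₙ`. -/
def PolyFormK {S : Type*} (k : ℕ) (f : (Fin k → List S) → List S) : Prop :=
  ∃ (n : ℕ) (w : ℕ → List S) (idx : ℕ → Fin k) (p : ℕ → ℕ), ∀ x : Fin k → List S,
    f x = w 0 ++ List.flatten ((List.range n).map fun j =>
      List.flatten (List.replicate (p (j + 1)) (x (idx (j + 1)))) ++ w (j + 1))

/-- RCP functions preserve the number of occurrences of a letter. -/
theorem IsRCPK.count_eq {S : Type*} [DecidableEq S] {k : ℕ}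
    {f : (Fin k → List S) → List S} (hf : IsRCPK k f) (a : S) {u v : Fin k → List S}
    (h : ∀ i, (u i).count a = (v i).count a) : (f u).count a = (f v).count a := by
  have hφ : IsHom fun x : List S => List.replicate (x.count a) a :=
    ⟨by simp, fun x y => by simp⟩
  simpa using congrArg List.length (hf _ hφ u v fun i => by simp only [h i])

/-- RCP functions over a nonempty alphabet preserve length. -/
theorem IsRCPK.length_eq {S : Type*} [Nonempty S] {k : ℕ}
    {f : (Fin k → List S) → List S} (hf : IsRCPK k f) {u v : Fin k → List S}
    (h : ∀ i, (u i).length = (v i).length) : (f u).length = (f v).length := by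
  obtain ⟨c⟩ := ‹Nonempty S›
  have hφ : IsHom fun x : List S => List.replicate x.length c :=
    ⟨by simp, fun x y => by simp⟩
  simpa using congrArg List.length (hf _ hφ u v fun i => by simp only [h i])

/-- Basic length and letter-count properties of `k`-ary RCP functions. -/
theorem stmt_13 {S : Type*} [DecidableEq S] (k : ℕ) (hk : 1 ≤ k)
    (f : (Fin k → List S) → List S) (hf : IsRCPK k f)
    (u v : Fin k → List S) (a b : S) (n : Fin k → ℕ) :
    ((∀ i, (u i).length = (v i).length) → (f u).length = (f v).length) ∧
    ((∀ i, (u i).count a = (v i).count a) → (f u).count a = (f v).count a) ∧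
    (b ≠ a →
      (f fun i => List.replicate (n i) a).count b = (f fun _ => []).count b) := by
  have : Nonempty S := ⟨a⟩
  exact ⟨hf.length_eq, hf.count_eq a, fun hba =>
    hf.count_eq b fun _ => by simp [List.count_replicate, hba.symm]⟩
end

section
/- Assume Σ has at least 3 elements, k ≥ 1, and f : (Σ*)ᵏ → Σ* is RCP. Then exactly one of the following three conditions holds: (C₁) there exists a letter b ∈ Σ such that f(x₁, …, x_k) ∈ bΣ* for all x₁, …, x_k ∈ Σ*; (C₂) there exists an index i ∈ {1, …, k} such that f(x₁, …, x_k) ∈ xᵢΣ* for all x₁, …, x_k ∈ Σ*; (C₃) f is constant with value ε. -/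
namespace FreeMonoidRCP

open Classical in
/-- The letter map sending `e` to `v` and fixing all other letters. -/
noncomputable def substLetter {S : Type*} (e : S) (v : List S) (a : S) : List S :=
  if a = e then v else [a]

@[simp] lemma substLetter_self {S : Type*} (e : S) (v : List S) : substLetter e v e = v := by
  simp [substLetter]

lemma substLetter_of_ne {S : Type*} {e a : S} (v : List S) (h : a ≠ e) : substLetter e v a = [a] := by
  simp [substLetter, h]

lemma flatMap_subst_of_notMem {S : Type*} {e : S} (v : List S) {x : List S} (h : e ∉ x) :
    x.flatMap (substLetter e v) = x := by
  induction x with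
  | nil => rfl
  | cons a t ih =>
    simp only [List.mem_cons, not_or] at h
    rw [List.flatMap_cons, ih h.2, substLetter_of_ne v (Ne.symm h.1)]
    rfl

lemma isHom_flatMap {S : Type*} (g : S → List S) : IsHom (fun x : List S => x.flatMap g) :=
  ⟨rfl, fun _ _ => List.flatMap_append⟩

lemma isHom_filter {S : Type*} (p : S → Bool) : IsHom (fun x : List S => x.filter p) :=
  ⟨rfl, fun _ _ => List.filter_append ..⟩

/-- A unary function preserving all restricted congruences. -/
def IsRCP {S : Type*} (f : List S → List S) : Prop :=
  ∀ φ : List S → List S, IsHom φ → ∀ x y : List S, φ x = φ y → φ (f x) = φ (f y)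

section Unary

variable {S : Type*} {f : List S → List S}

lemma IsRCP.filter_apply (hf : IsRCP f) (p : S → Bool) (x : List S) :
    (f x).filter p = (f (x.filter p)).filter p :=
  hf _ (isHom_filter p) _ _ (by simp)

lemma IsRCP.flatMap_subst (hf : IsRCP f) {e : S} {x : List S} (h : e ∉ x) :
    (f x).flatMap (substLetter e x) = (f [e]).flatMap (substLetter e x) :=
  hf _ (isHom_flatMap _) _ _ (by simp [flatMap_subst_of_notMem x h])

lemma exists_of_not_prefix {x z : List S} (h : ¬ x <+: z) :
    ∃ (u : List S) (a : S) (x' : List S), x = u ++ a :: x' ∧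
      (z = u ∨ ∃ (g : S) (z' : List S), g ≠ a ∧ z = u ++ g :: z') := by
  induction x generalizing z with
  | nil => exact absurd List.nil_prefix h
  | cons a t ih =>
    cases z with
    | nil => exact ⟨[], a, t, rfl, Or.inl rfl⟩
    | cons g z =>
      by_cases hga : g = a
      · subst hga
        rw [List.prefix_cons_inj] at h
        obtain ⟨u, b, x', rfl, hz⟩ := ih h
        refine ⟨g :: u, b, x', rfl, ?_⟩
        rcases hz with rfl | ⟨c, z', hc, rfl⟩
        · exact Or.inl rfl
        · exact Or.inr ⟨c, z', hc, rfl⟩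
      · exact ⟨[], a, t, rfl, Or.inr ⟨g, z, hga, rfl⟩⟩

/-- If `x = u a x'` while `z = u` or `z = u g z'` with `g ≠ a`, then `x` is not a prefix of `z`. -/
lemma not_append_cons_prefix {u x' z : List S} {a : S}
    (hz : z = u ∨ ∃ (g : S) (z' : List S), g ≠ a ∧ z = u ++ g :: z') :
    ¬ (u ++ a :: x' <+: z) := by
  rcases hz with rfl | ⟨g, z', hg, rfl⟩
  · intro h
    have := h.length_le
    simp at this
  · rw [List.prefix_append_right_inj, List.cons_prefix_cons]
    exact fun h => hg h.1.symm

/-- If every `f [a]` starts with `a` then every `f x` starts with `x`. -/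
lemma IsRCP.prefix_apply (h3 : ∀ a b : S, ∃ c, c ≠ a ∧ c ≠ b) (hf : IsRCP f)
    (h1 : ∀ a : S, [a] <+: f [a]) (x : List S) : x <+: f x := by
  classical
  have key : ∀ (e : S) (x : List S), e ∉ x → x <+: (f x).flatMap (substLetter e x) := by
    intro e x he
    rw [hf.flatMap_subst he]
    obtain ⟨t, ht⟩ := h1 e
    rw [← ht]
    simp
  have hdiverge : ∀ (e : S) (x u x' : List S) (a : S), e ∉ x → x = u ++ a :: x' →
      (f x = u ∨ ∃ (g : S) (z' : List S), g ≠ a ∧ f x = u ++ g :: z') →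
      ∃ z', f x = u ++ e :: z' := by
    intro e x u x' a he hx hz
    have hk := key e x he
    have hu : e ∉ u := fun h => he (by rw [hx]; simp [h])
    rcases hz with hz | ⟨g, z', hg, hz⟩
    · rw [hz, flatMap_subst_of_notMem x hu] at hk
      rw [hx] at hk
      exact absurd hk (not_append_cons_prefix (Or.inl rfl))
    · by_cases hge : g = e
      · exact ⟨z', by rw [hz, hge]⟩
      · rw [hz, List.flatMap_append, flatMap_subst_of_notMem x hu, List.flatMap_cons,
          substLetter_of_ne x hge] at hk
        nth_rewrite 1 [hx] at hk
        exact absurd hk (not_append_cons_prefix (Or.inr ⟨g, _, hg, rfl⟩))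
  have hrep : ∀ (a : S) (n : ℕ), List.replicate n a <+: f (List.replicate n a) := by
    intro a n
    by_contra hn
    obtain ⟨u, c, x', hx, hz⟩ := exists_of_not_prefix hn
    obtain ⟨d, hd, -⟩ := h3 a a
    obtain ⟨e, he, hed⟩ := h3 a d
    obtain ⟨z₁, h₁⟩ := hdiverge d _ u x' c (fun h => hd (List.eq_of_mem_replicate h)) hx hz
    obtain ⟨z₂, h₂⟩ := hdiverge e _ u x' c (fun h => he (List.eq_of_mem_replicate h)) hx hz
    rw [h₁] at h₂
    have := List.append_cancel_left h₂
    simp only [List.cons.injEq] at this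
    exact hed this.1.symm
  have hmiss : ∀ (e : S) (x : List S), e ∉ x → x <+: f x := by
    intro e x he
    by_contra hn
    obtain ⟨u, a, x', hx, hz⟩ := exists_of_not_prefix hn
    obtain ⟨z, h⟩ := hdiverge e x u x' a he hx hz
    have hea : e ≠ a := by rintro rfl; exact he (by rw [hx]; simp)
    let p : S → Bool := fun s => decide (s = a ∨ s = e)
    have hxp : x.filter p = List.replicate (x.filter p).length a := by
      rw [List.eq_replicate_iff]
      refine ⟨rfl, fun s hs => ?_⟩
      rw [List.mem_filter] at hs
      have hs2 : s = a ∨ s = e := by simpa [p] using hs.2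
      rcases hs2 with h | h
      · exact h
      · exact absurd (h ▸ hs.1) he
    have hpre : x.filter p <+: f (x.filter p) := by
      rw [hxp]; exact hrep _ _
    have hpre2 := hpre.filter p
    rw [← hf.filter_apply, h, hx] at hpre2
    simp only [List.filter_filter, Bool.and_self, List.filter_append] at hpre2
    rw [List.filter_cons_of_pos (by simp [p]), List.filter_cons_of_pos (by simp [p])] at hpre2
    exact not_append_cons_prefix (Or.inr ⟨e, _, hea, rfl⟩) hpre2
  by_contra hn
  obtain ⟨u, a, x', hx, hz⟩ := exists_of_not_prefix hn
  obtain ⟨g, hg⟩ : ∃ g, f x = u ∨ ∃ z', g ≠ a ∧ f x = u ++ g :: z' := by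
    rcases hz with h | ⟨g, hg⟩
    · exact ⟨a, Or.inl h⟩
    · exact ⟨g, Or.inr hg⟩
  obtain ⟨e, hea, heg⟩ := h3 a g
  let p : S → Bool := fun s => decide (s = a ∨ s = g)
  have hpre := (hmiss e (x.filter p) (by simp [p, hea, heg])).filter p
  rw [← hf.filter_apply, hx] at hpre
  simp only [List.filter_filter, Bool.and_self, List.filter_append] at hpre
  rw [List.filter_cons_of_pos (by simp [p]), ← hx] at hpre
  refine not_append_cons_prefix ?_ hpre
  rcases hg with h | ⟨z', hga, h⟩
  · exact Or.inl (by rw [h])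
  · refine Or.inr ⟨g, z'.filter p, hga, ?_⟩
    rw [h, List.filter_append, List.filter_cons_of_pos (by simp [p])]

/-- If `f [e]` starts with `b ≠ e` then every `f x` starts with `b`. -/
lemma IsRCP.singleton_prefix_apply (h3 : ∀ a b : S, ∃ c, c ≠ a ∧ c ≠ b) (hf : IsRCP f)
    {b e : S} (heb : e ≠ b) (he : [b] <+: f [e]) (x : List S) :
    [b] <+: f x := by
  classical
  have hletter : ∀ d, d ≠ b → [b] <+: f [d] := by
    intro d hd
    by_cases hde : d = e
    · rw [hde]; exact he
    have hm := hf.flatMap_subst (e := d) (x := [e]) (by simpa using hde)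
    obtain ⟨t, ht⟩ := he
    rw [← ht, List.singleton_append, List.flatMap_cons, substLetter_of_ne _ (Ne.symm hd)] at hm
    cases hfd : f [d] with
    | nil => simp [hfd] at hm
    | cons h s =>
      rw [hfd, List.flatMap_cons] at hm
      by_cases hh : h = d
      · rw [hh, substLetter_self] at hm
        simp at hm
        exact absurd hm.1.symm heb
      · rw [substLetter_of_ne _ hh] at hm
        simp at hm
        simp [hm.1]
  have hmiss : ∀ (e : S) (x : List S), e ≠ b → e ∉ x → [b] <+: f x ∨ [e] <+: f x := by
    intro e x heb hex
    have hm := hf.flatMap_subst hex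
    obtain ⟨t, ht⟩ := hletter e heb
    rw [← ht, List.singleton_append, List.flatMap_cons, substLetter_of_ne _ (Ne.symm heb)] at hm
    cases hfd : f x with
    | nil => simp [hfd] at hm
    | cons h s =>
      by_cases hh : h = e
      · right; simp [hh]
      · rw [hfd, List.flatMap_cons, substLetter_of_ne _ hh] at hm
        simp at hm
        left; simp [hm.1]
  have hrep : ∀ n : ℕ, [b] <+: f (List.replicate n b) := by
    intro n
    obtain ⟨d, hd, -⟩ := h3 b b
    obtain ⟨e, he, hed⟩ := h3 b d
    rcases hmiss d _ hd (fun h => hd (List.eq_of_mem_replicate h)) with h | ⟨s, hs⟩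
    · exact h
    rcases hmiss e _ he (fun h => he (List.eq_of_mem_replicate h)) with h | ⟨t, ht⟩
    · exact h
    rw [← hs] at ht
    simp at ht
    exact absurd ht.1 hed
  have hmiss' : ∀ (e : S) (x : List S), e ≠ b → e ∉ x → [b] <+: f x := by
    intro e x heb hex
    rcases hmiss e x heb hex with h | ⟨t, ht⟩
    · exact h
    exfalso
    let p : S → Bool := fun s => decide (s = b ∨ s = e)
    have hxp : x.filter p = List.replicate (x.filter p).length b := by
      rw [List.eq_replicate_iff]
      refine ⟨rfl, fun s hs => ?_⟩
      rw [List.mem_filter] at hs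
      have hs2 : s = b ∨ s = e := by simpa [p] using hs.2
      rcases hs2 with h | h
      · exact h
      · exact absurd (h ▸ hs.1) hex
    have hpre := (hrep (x.filter p).length).filter p
    rw [← hxp, ← hf.filter_apply, ← ht] at hpre
    simp [p] at hpre
    exact heb hpre.symm
  obtain ⟨c, hc⟩ : ∃ c, f x = [] ∨ ∃ t, f x = c :: t := by
    cases h : f x with
    | nil => exact ⟨b, Or.inl rfl⟩
    | cons c t => exact ⟨c, Or.inr ⟨t, rfl⟩⟩
  obtain ⟨e, heb, hec⟩ := h3 b c
  let p : S → Bool := fun s => decide (s = b ∨ s = c)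
  have hpre := (hmiss' e (x.filter p) heb (by simp [p, heb, hec])).filter p
  rw [← hf.filter_apply] at hpre
  rcases hc with h | ⟨t, h⟩
  · simp [h, p] at hpre
  · simp [h, p] at hpre
    simp [h, hpre]

/-- If all `f [e]` are empty then `f` is constantly empty. -/
lemma IsRCP.apply_eq_nil (h3 : ∀ a b : S, ∃ c, c ≠ a ∧ c ≠ b) (hf : IsRCP f)
    (h1 : ∀ e, f [e] = []) (x : List S) : f x = [] := by
  classical
  rw [List.eq_nil_iff_forall_not_mem]
  intro a ha
  let p : S → Bool := fun s => decide (s = a)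
  have hmem : a ∈ f (x.filter p) := by
    have : a ∈ (f x).filter p := by simp [p, ha]
    rw [hf.filter_apply] at this
    exact (List.mem_filter.1 this).1
  obtain ⟨d, hd, -⟩ := h3 a a
  have hm := hf.flatMap_subst (e := d) (x := x.filter p) (by simp [p, hd])
  rw [h1 d, List.flatMap_nil, List.flatMap_eq_nil_iff] at hm
  have := hm a hmem
  rw [substLetter_of_ne _ (Ne.symm hd)] at this
  simp at this

lemma IsRCP.trichotomy (h3 : ∀ a b : S, ∃ c, c ≠ a ∧ c ≠ b) (hf : IsRCP f) :
    (∃ b : S, ∀ x, [b] <+: f x) ∨ (∀ x, x <+: f x) ∨ (∀ x, f x = []) := by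
  have herase : ∀ e : S, (f []).flatMap (substLetter e []) = (f [e]).flatMap (substLetter e []) :=
    fun e => hf.flatMap_subst (by simp)
  have hmerge : ∀ d e : S, d ≠ e →
      (f [e]).flatMap (substLetter d [e]) = (f [d]).flatMap (substLetter d [e]) :=
    fun d e h => hf.flatMap_subst (by simpa using h)
  cases h0 : f [] with
  | nil =>
    have hstar : ∀ e a, a ∈ f [e] → a = e := by
      intro e a ha
      by_contra hne
      have h := herase e
      rw [h0, List.flatMap_nil, eq_comm, List.flatMap_eq_nil_iff] at h
      have := h a ha
      rw [substLetter_of_ne _ hne] at this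
      simp at this
    by_cases hall : ∀ e, f [e] = []
    · exact Or.inr (Or.inr (hf.apply_eq_nil h3 hall))
    · push Not at hall
      obtain ⟨e, he⟩ := hall
      refine Or.inr (Or.inl (hf.prefix_apply h3 fun a => ?_))
      have hne : f [a] ≠ [] := by
        by_cases hae : a = e
        · rwa [hae]
        intro h
        have hm := hmerge a e hae
        rw [h, List.flatMap_nil, List.flatMap_eq_nil_iff] at hm
        obtain ⟨s, t, hs⟩ := List.exists_cons_of_ne_nil he
        have hse : s = e := hstar e s (by simp [hs])
        have := hm s (by simp [hs])
        rw [substLetter_of_ne _ (by rw [hse]; exact Ne.symm hae)] at this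
        simp at this
      obtain ⟨s, t, hs⟩ := List.exists_cons_of_ne_nil hne
      have hsa : s = a := hstar a s (by simp [hs])
      rw [hs, hsa]
      simp
  | cons b w =>
    by_cases hex : ∃ e, e ≠ b ∧ [b] <+: f [e]
    · obtain ⟨e, heb, he⟩ := hex
      exact Or.inl ⟨b, hf.singleton_prefix_apply h3 heb he⟩
    · push Not at hex
      have hne : ∀ e, e ≠ b → [e] <+: f [e] := by
        intro e heb
        have h := herase e
        rw [h0, List.flatMap_cons, substLetter_of_ne _ (Ne.symm heb)] at h
        cases hfe : f [e] with
        | nil => simp [hfe] at h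
        | cons s t =>
          by_cases hse : s = e
          · simp [hse]
          · rw [hfe, List.flatMap_cons, substLetter_of_ne _ hse] at h
            simp at h
            exact absurd (by simp [hfe, h.1]) (hex e heb)
      refine Or.inr (Or.inl (hf.prefix_apply h3 fun a => ?_))
      by_cases hab : a = b
      · subst hab
        have hd : ∀ d, d ≠ a → [a] <+: f [a] ∨ [d] <+: f [a] := by
          intro d hda
          have hm := hmerge d a hda
          obtain ⟨t, ht⟩ := hne d hda
          rw [← ht, List.singleton_append, List.flatMap_cons, substLetter_self] at hm
          cases hfa : f [a] with
          | nil => simp [hfa] at hm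
          | cons s r =>
            by_cases hsd : s = d
            · right; simp [hsd]
            · rw [hfa, List.flatMap_cons, substLetter_of_ne _ hsd] at hm
              simp at hm
              left; simp [hm.1]
        obtain ⟨d, hda, -⟩ := h3 a a
        obtain ⟨e, hea, hed⟩ := h3 a d
        rcases hd d hda with h | ⟨s, hs⟩
        · exact h
        rcases hd e hea with h | ⟨t, ht⟩
        · exact h
        rw [← hs] at ht
        simp at ht
        exact absurd ht.1 hed
      · exact hne a hab

end Unary

lemma trichotomy {S : Type*} [Nonempty S] (h3 : ∀ a b : S, ∃ c, c ≠ a ∧ c ≠ b) (k : ℕ)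
    (f : (Fin k → List S) → List S) (hf : IsRCPK k f) :
    (∃ b : S, ∀ x, [b] <+: f x) ∨ (∃ i, ∀ x, x i <+: f x) ∨ (∀ x, f x = []) := by
  classical
  induction k with
  | zero =>
    cases h : f Fin.elim0 with
    | nil => exact Or.inr (Or.inr fun x => by rw [Subsingleton.elim x Fin.elim0, h])
    | cons b t =>
      exact Or.inl ⟨b, fun x => by rw [Subsingleton.elim x Fin.elim0, h]; simp⟩
  | succ k ih =>
    have hslice := fun a : List S => ih (fun y => f (Fin.cons a y)) (by
      intro φ hφ x y hxy
      refine hf φ hφ _ _ (Fin.cases rfl fun i => ?_)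
      simpa using hxy i)
    have hline := fun y : Fin k → List S =>
      IsRCP.trichotomy (f := fun a => f (Fin.cons a y)) h3 (by
        intro φ hφ a a' haa
        refine hf φ hφ _ _ (Fin.cases ?_ fun i => ?_)
        · simpa using haa
        · simp)
    have hcons : ∀ {P : (Fin (k + 1) → List S) → Prop}, (∀ a y, P (Fin.cons a y)) → ∀ x, P x :=
      fun h x => by rw [← Fin.cons_self_tail x]; exact h _ _
    have hlt : ∀ {b c : S} {z : List S}, [b] <+: z → [c] <+: z → b = c := by
      rintro b c z ⟨s, rfl⟩ h
      simpa [eq_comm] using h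
    by_cases h2 : ∃ s t i, ∀ y : Fin k → List S, y i <+: f (Fin.cons (s :: t) y)
    · obtain ⟨s, t, i, hi⟩ := h2
      have hy : ∀ (c : S) (y : Fin k → List S), c ≠ s → y i = [c] →
          ∀ a, [c] <+: f (Fin.cons a y) := by
        intro c y hcs hyi a
        have hc := hi y
        rw [hyi] at hc
        rcases hline y with ⟨b, hb⟩ | h | h
        · rw [hlt hc (hb _)]
          exact hb a
        · exact absurd (hlt hc (List.IsPrefix.trans (by simp) (h (s :: t)))) hcs
        · simp [h] at hc
      obtain ⟨c, hcs, -⟩ := h3 s s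
      obtain ⟨d, hds, hdc⟩ := h3 s c
      refine Or.inr (Or.inl ⟨i.succ, hcons fun a y => ?_⟩)
      have hc := hy c (fun _ => [c]) hcs rfl a
      have hd := hy d (fun _ => [d]) hds rfl a
      rcases hslice a with ⟨b, hb⟩ | ⟨j, hj⟩ | h
      · exact absurd ((hlt hd (hb _)).trans (hlt hc (hb _)).symm) hdc
      · by_cases hji : j = i
        · subst hji
          simpa using hj y
        · have hu := hy c (Function.update (fun _ => [d]) i [c]) hcs (by simp) a
          have hv := hj (Function.update (fun _ => [d]) i [c])
          rw [Function.update_of_ne hji] at hv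
          exact absurd (hlt hv hu) hdc
      · simp [h] at hc
    · have hslice' : ∀ s t, (∃ b : S, ∀ y, [b] <+: f (Fin.cons (s :: t) y)) ∨
          ∀ y, f (Fin.cons (s :: t) y) = [] := fun s t =>
        (hslice (s :: t)).imp_right fun h => h.resolve_left fun ⟨i, hi⟩ => h2 ⟨s, t, i, hi⟩
      obtain ⟨s₀⟩ := ‹Nonempty S›
      by_cases hall : ∀ y : Fin k → List S, ∀ a, a <+: f (Fin.cons a y)
      · exact Or.inr (Or.inl ⟨0, hcons fun a y => by simpa using hall y a⟩)
      push Not at hall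
      obtain ⟨y, a₀, hy⟩ := hall
      rcases hline y with ⟨b, hb⟩ | h | h
      · have hne : ∀ s t y', [b] <+: f (Fin.cons (s :: t) y') := by
          intro s t y'
          rcases hslice' s t with ⟨c, hc⟩ | h
          · rw [hlt (hb (s :: t)) (hc y)]
            exact hc y'
          · simpa [h] using hb (s :: t)
        refine Or.inl ⟨b, hcons fun a y' => ?_⟩
        rcases hline y' with ⟨c, hc⟩ | h | h
        · rw [hlt (hne s₀ [] y') (hc _)]
          exact hc a
        · obtain ⟨c, hc, -⟩ := h3 b b
          exact absurd (hlt (h [c]) (hne c [] y')) hc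
        · simpa [h] using hne s₀ [] y'
      · exact absurd (h a₀) hy
      · have hne : ∀ s t y', f (Fin.cons (s :: t) y') = [] := by
          intro s t
          refine (hslice' s t).resolve_left fun ⟨c, hc⟩ => ?_
          simpa [h] using hc y
        refine Or.inr (Or.inr (hcons fun a y' => ?_))
        rcases hline y' with ⟨c, hc⟩ | h | h
        · simpa [hne] using hc [s₀]
        · simpa [hne] using h [s₀]
        · exact h a

end FreeMonoidRCP

/-- If `S` has at least 3 elements, `k ≥ 1` and `f : (S*)ᵏ → S*` is RCP, then exactly one
of the following holds: (C₁) there is a letter `b` such that every value of `f` starts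
with `b`; (C₂) there is an index `i` such that `xᵢ` is a prefix of `f(x₁,…,x_k)` always;
(C₃) `f` is constantly `ε`. -/
theorem stmt_15 {S : Type*} (c₁ c₂ c₃ : S) (h12 : c₁ ≠ c₂) (h13 : c₁ ≠ c₃) (h23 : c₂ ≠ c₃)
    (k : ℕ) (hk : 1 ≤ k) (f : (Fin k → List S) → List S) (hf : IsRCPK k f) :
    ((∃ b : S, ∀ x : Fin k → List S, ∃ w : List S, f x = b :: w) ∧
      ¬ (∃ i : Fin k, ∀ x : Fin k → List S, ∃ w : List S, f x = x i ++ w) ∧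
      ¬ (∀ x : Fin k → List S, f x = [])) ∨
    (¬ (∃ b : S, ∀ x : Fin k → List S, ∃ w : List S, f x = b :: w) ∧
      (∃ i : Fin k, ∀ x : Fin k → List S, ∃ w : List S, f x = x i ++ w) ∧
      ¬ (∀ x : Fin k → List S, f x = [])) ∨
    (¬ (∃ b : S, ∀ x : Fin k → List S, ∃ w : List S, f x = b :: w) ∧
      ¬ (∃ i : Fin k, ∀ x : Fin k → List S, ∃ w : List S, f x = x i ++ w) ∧
      (∀ x : Fin k → List S, f x = [])) := by
  have : Nonempty S := ⟨c₁⟩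
  have h3 : ∀ a b : S, ∃ c, c ≠ a ∧ c ≠ b := by
    intro a b
    by_cases h₁ : c₁ = a ∨ c₁ = b
    · by_cases h₂ : c₂ = a ∨ c₂ = b
      · refine ⟨c₃, ?_, ?_⟩ <;> rintro rfl <;> grind
      · exact ⟨c₂, not_or.1 h₂⟩
    · exact ⟨c₁, not_or.1 h₁⟩
  have hC12 : (∃ b : S, ∀ x : Fin k → List S, ∃ w : List S, f x = b :: w) →
      ¬ (∃ i : Fin k, ∀ x : Fin k → List S, ∃ w : List S, f x = x i ++ w) := by
    rintro ⟨b, hb⟩ ⟨i, hi⟩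
    obtain ⟨c, hc, -⟩ := h3 b b
    obtain ⟨w, hw⟩ := hb fun _ => [c]
    obtain ⟨v, hv⟩ := hi fun _ => [c]
    rw [hw] at hv
    simp at hv
    exact hc hv.1.symm
  have hC13 : (∃ b : S, ∀ x : Fin k → List S, ∃ w : List S, f x = b :: w) →
      ¬ (∀ x : Fin k → List S, f x = []) := by
    rintro ⟨b, hb⟩ h
    obtain ⟨w, hw⟩ := hb fun _ => []
    simp [h] at hw
  have hC23 : (∃ i : Fin k, ∀ x : Fin k → List S, ∃ w : List S, f x = x i ++ w) →
      ¬ (∀ x : Fin k → List S, f x = []) := by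
    rintro ⟨i, hi⟩ h
    obtain ⟨w, hw⟩ := hi fun _ => [c₁]
    simp [h] at hw
  rcases FreeMonoidRCP.trichotomy h3 k f hf with ⟨b, hb⟩ | ⟨i, hi⟩ | h
  · have h1 : ∃ b : S, ∀ x : Fin k → List S, ∃ w : List S, f x = b :: w :=
      ⟨b, fun x => (hb x).imp fun _ h => h.symm⟩
    exact Or.inl ⟨h1, hC12 h1, hC13 h1⟩
  · have h2 : ∃ i : Fin k, ∀ x : Fin k → List S, ∃ w : List S, f x = x i ++ w :=
      ⟨i, fun x => (hi x).imp fun _ h => h.symm⟩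
    exact Or.inr (Or.inl ⟨fun h1 => hC12 h1 h2, h2, hC23 h2⟩)
  · exact Or.inr (Or.inr ⟨fun h1 => hC13 h1 h, fun h2 => hC23 h2 h, h⟩)
end
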